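/- For the family 𝔤₁₈(β, b, z₃, z₄, θ₁, θ₂) with β ≠ 0 and b ≠ 0, the structure J is integrable, i.e. the Nijenhuis tensor N(E,F) = 0 for all E, F ∈ 𝔤, if and only if z₃ = 0 and z₄ = 0. -/

import Mathlib

noncomputable section

/-- The bilinear antisymmetric bracket on ℝ⁴ determined by the structure constants. -/
def bk (β b z₃ z₄ θ₁ θ₂ : ℝ) (E F : Fin 4 → ℝ) : Fin 4 → ℝ :=
  (E 0 * F 1 - E 1 * F 0) • (![0, 0, -θ₁, -θ₂] : Fin 4 → ℝ) +
  (E 0 * F 2 - E 2 * F 0) • (![0, -β, -(β * z₃ / b), β ^ 2 * z₃ / b ^ 2] : Fin 4 → ℝ) +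
  (E 0 * F 3 - E 3 * F 0) • (![0, -b, -z₃, β * z₃ / b] : Fin 4 → ℝ) +
  (E 1 * F 2 - E 2 * F 1) • (![β, 0, -(β * z₄ / b), β ^ 2 * z₄ / b ^ 2] : Fin 4 → ℝ) +
  (E 1 * F 3 - E 3 * F 1) • (![b, 0, -z₄, β * z₄ / b] : Fin 4 → ℝ) +
  (E 2 * F 3 - E 3 * F 2) • (![0, 0, 0, 0] : Fin 4 → ℝ)

/-- The almost Hermitian structure J with J(X)=Y, J(Y)=-X, J(Z)=W, J(W)=-Z. -/
def Jm (E : Fin 4 → ℝ) : Fin 4 → ℝ := ![-E 1, E 0, -E 3, E 2]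

/-- The Nijenhuis tensor of J. -/
def NT (β b z₃ z₄ θ₁ θ₂ : ℝ) (E F : Fin 4 → ℝ) : Fin 4 → ℝ :=
  bk β b z₃ z₄ θ₁ θ₂ E F + Jm (bk β b z₃ z₄ θ₁ θ₂ (Jm E) F) + Jm (bk β b z₃ z₄ θ₁ θ₂ E (Jm F)) -
    bk β b z₃ z₄ θ₁ θ₂ (Jm E) (Jm F)

/-!
The Nijenhuis tensor is conjugate-linear in each argument and alternating, so on a space spanned by
`X, JX, Z, JZ` it vanishes as soon as `N(X, Z)` does. For the family `𝔤₁₈`, viewing `ℝ⁴` as a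
complex vector space through `J` and writing `t = β / b`, one finds
`N(X, Z) = (1 - t i)² (z₄ - z₃ i) Z`; the first factor is nonzero because `t` is real.
-/

section Nijenhuis

variable {R M : Type*} [CommRing R] [AddCommGroup M] [Module R M]
  {J : Module.End R M} {B : M →ₗ[R] M →ₗ[R] M}

/-- The Nijenhuis tensor of an endomorphism `J` with respect to a bilinear bracket `B`, as a
bilinear map. The term `B x y` stands for `-J (J (B x y))`, so this is meant for `J * J = -1`. -/
def nijenhuis (J : Module.End R M) (B : M →ₗ[R] M →ₗ[R] M) : M →ₗ[R] M →ₗ[R] M :=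
  B + (B.comp J).compr₂ J + (B.compl₂ J).compr₂ J - B.compl₁₂ J J

theorem nijenhuis_apply (J : Module.End R M) (B : M →ₗ[R] M →ₗ[R] M) (x y : M) :
    nijenhuis J B x y = B x y + J (B (J x) y) + J (B x (J y)) - B (J x) (J y) :=
  rfl

theorem apply_apply_eq_neg_of_mul_self (hJ : J * J = -1) (x : M) : J (J x) = -x :=
  LinearMap.congr_fun hJ x

theorem nijenhuis_apply_left (hJ : J * J = -1) (B : M →ₗ[R] M →ₗ[R] M) (x y : M) :
    nijenhuis J B (J x) y = -J (nijenhuis J B x y) := by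
  simp only [nijenhuis_apply, apply_apply_eq_neg_of_mul_self hJ, map_add, map_sub, map_neg,
    LinearMap.neg_apply]
  abel

theorem nijenhuis_apply_right (hJ : J * J = -1) (B : M →ₗ[R] M →ₗ[R] M) (x y : M) :
    nijenhuis J B x (J y) = -J (nijenhuis J B x y) := by
  simp only [nijenhuis_apply, apply_apply_eq_neg_of_mul_self hJ, map_add, map_sub, map_neg]
  abel

theorem isAlt_nijenhuis (J : Module.End R M) (hB : B.IsAlt) : (nijenhuis J B).IsAlt := fun x => by
  rw [nijenhuis_apply, hB.self_eq_zero, hB.self_eq_zero, ← hB.neg, map_neg]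
  abel

theorem nijenhuis_eq_zero_of_span_eq_top {s : Set M} (hJ : J * J = -1)
    (hs : Submodule.span R (s ∪ J '' s) = ⊤)
    (h : ∀ x ∈ s, ∀ y ∈ s, nijenhuis J B x y = 0) : nijenhuis J B = 0 := by
  refine LinearMap.ext_on hs fun u hu => LinearMap.ext_on hs fun v hv => ?_
  rcases hu with hx | ⟨x, hx, rfl⟩ <;> rcases hv with hy | ⟨y, hy, rfl⟩ <;>
    simp [nijenhuis_apply_left hJ, nijenhuis_apply_right hJ, h _ hx _ hy]

theorem nijenhuis_eq_zero_iff_of_span_pair {x z : M} (hJ : J * J = -1) (hB : B.IsAlt)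
    (hs : Submodule.span R ({x, z} ∪ J '' {x, z}) = ⊤) :
    nijenhuis J B = 0 ↔ nijenhuis J B x z = 0 := by
  refine ⟨fun h => by simp [h], fun hxz => nijenhuis_eq_zero_of_span_eq_top hJ hs ?_⟩
  have hN := isAlt_nijenhuis J hB
  have hzx : nijenhuis J B z x = 0 := by rw [← hN.neg, hxz, neg_zero]
  rintro _ (rfl | rfl) _ (rfl | rfl)
  exacts [hN.self_eq_zero _, hxz, hzx, hN.self_eq_zero _]

end Nijenhuis

theorem ringHom_apply_apply_eq_zero_iff {K R M : Type*} [DivisionRing K] [Semiring R]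
    [AddCommGroup M] [Module R M] (f : K →+* Module.End R M) {c : K} {v : M} :
    f c v = 0 ↔ c = 0 ∨ v = 0 :=
  letI : Module K M := Module.compHom M f
  (smul_eq_zero : c • v = 0 ↔ c = 0 ∨ v = 0)

/-- The almost complex structure `Jm` as a linear endomorphism, the form that `nijenhuis` and
`Complex.lift` take. -/
def jmEnd : Module.End ℝ (Fin 4 → ℝ) where
  toFun := Jm
  map_add' E F := by ext i; fin_cases i <;> simp [Jm, add_comm]
  map_smul' c E := by ext i; fin_cases i <;> simp [Jm]

theorem jmEnd_mul_self : jmEnd * jmEnd = -1 := by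
  refine LinearMap.ext fun E => ?_
  ext i
  fin_cases i <;> simp [jmEnd, Jm]

theorem jmEnd_single_zero : jmEnd (Pi.single 0 1) = Pi.single 1 1 := by
  ext i
  fin_cases i <;> simp [jmEnd, Jm]

theorem jmEnd_single_two : jmEnd (Pi.single 2 1) = Pi.single 3 1 := by
  ext i
  fin_cases i <;> simp [jmEnd, Jm]

theorem span_pair_union_image_jmEnd :
    Submodule.span ℝ ({Pi.single 0 1, Pi.single 2 1} ∪
      jmEnd '' {Pi.single 0 1, Pi.single 2 1}) = ⊤ := by
  rw [Set.image_pair, jmEnd_single_zero, jmEnd_single_two, eq_top_iff,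
    ← (Pi.basisFun ℝ (Fin 4)).span_eq]
  refine Submodule.span_mono (Set.range_subset_iff.mpr fun i => ?_)
  fin_cases i <;> simp [Pi.basisFun_apply]

/-- The action of `ℂ` on `ℝ⁴` in which `Complex.I` acts as `J`. -/
def jmComplexAction : ℂ →ₐ[ℝ] Module.End ℝ (Fin 4 → ℝ) :=
  Complex.lift ⟨jmEnd, jmEnd_mul_self⟩

theorem jmComplexAction_single_two (c : ℂ) :
    jmComplexAction c (Pi.single 2 1) = ![0, 0, c.re, c.im] := by
  ext i
  fin_cases i <;> simp [jmComplexAction, Complex.liftAux_apply, jmEnd_single_two]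

section Bracket

variable (β b z₃ z₄ θ₁ θ₂ : ℝ)

/-- The bracket `bk` of the family `𝔤₁₈` as a bilinear map, the form that `nijenhuis` takes. -/
def bkBilin : (Fin 4 → ℝ) →ₗ[ℝ] (Fin 4 → ℝ) →ₗ[ℝ] (Fin 4 → ℝ) :=
  LinearMap.mk₂ ℝ (bk β b z₃ z₄ θ₁ θ₂)
    (fun E E' F => by simp only [bk, Pi.add_apply]; module)
    (fun c E F => by simp only [bk, Pi.smul_apply, smul_eq_mul]; module)
    (fun E F F' => by simp only [bk, Pi.add_apply]; module)
    (fun c E F => by simp only [bk, Pi.smul_apply, smul_eq_mul]; module)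

theorem isAlt_bkBilin : (bkBilin β b z₃ z₄ θ₁ θ₂).IsAlt := fun E => by
  simp only [bkBilin, LinearMap.mk₂_apply, bk]
  module

theorem nijenhuis_jmEnd_bkBilin (E F : Fin 4 → ℝ) :
    nijenhuis jmEnd (bkBilin β b z₃ z₄ θ₁ θ₂) E F = NT β b z₃ z₄ θ₁ θ₂ E F :=
  rfl

theorem NT_single_zero_single_two :
    NT β b z₃ z₄ θ₁ θ₂ (Pi.single 0 1) (Pi.single 2 1) =
      jmComplexAction ((1 - (β / b : ℝ) * Complex.I) ^ 2 * (z₄ - z₃ * Complex.I))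
        (Pi.single 2 1) := by
  set t := β / b with ht
  have bracket_XZ : bk β b z₃ z₄ θ₁ θ₂ (Pi.single 0 1) (Pi.single 2 1) =
      ![0, -β, -(t * z₃), t ^ 2 * z₃] := by
    ext i; fin_cases i <;> simp [bk, ht, div_mul_eq_mul_div, div_pow]
  have bracket_XW : bk β b z₃ z₄ θ₁ θ₂ (Pi.single 0 1) (Pi.single 3 1) =
      ![0, -b, -z₃, t * z₃] := by
    ext i; fin_cases i <;> simp [bk, ht, div_mul_eq_mul_div]
  have bracket_YZ : bk β b z₃ z₄ θ₁ θ₂ (Pi.single 1 1) (Pi.single 2 1) =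
      ![β, 0, -(t * z₄), t ^ 2 * z₄] := by
    ext i; fin_cases i <;> simp [bk, ht, div_mul_eq_mul_div, div_pow]
  have bracket_YW : bk β b z₃ z₄ θ₁ θ₂ (Pi.single 1 1) (Pi.single 3 1) =
      ![b, 0, -z₄, t * z₄] := by
    ext i; fin_cases i <;> simp [bk, ht, div_mul_eq_mul_div]
  have JX : Jm (Pi.single 0 1) = Pi.single 1 1 := jmEnd_single_zero
  have JZ : Jm (Pi.single 2 1) = Pi.single 3 1 := jmEnd_single_two
  rw [NT, JX, JZ, bracket_XZ, bracket_XW, bracket_YZ, bracket_YW, jmComplexAction_single_two]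
  ext i
  fin_cases i <;> simp [Jm, pow_two] <;> ring

end Bracket

theorem one_sub_ofReal_mul_I_sq_mul_eq_zero_iff (t p q : ℝ) :
    (1 - t * Complex.I) ^ 2 * (p - q * Complex.I) = 0 ↔ p = 0 ∧ q = 0 := by
  have h : 1 - t * Complex.I ≠ 0 := fun h => by simpa using congrArg Complex.re h
  simp [h, Complex.ext_iff]

theorem g18_integrable_iff (β b z₃ z₄ θ₁ θ₂ : ℝ) (hβ : β ≠ 0) (hb : b ≠ 0) :
    (∀ E F : Fin 4 → ℝ, NT β b z₃ z₄ θ₁ θ₂ E F = 0) ↔ (z₃ = 0 ∧ z₄ = 0) := by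
  have Z_ne_zero : (Pi.single 2 1 : Fin 4 → ℝ) ≠ 0 := by simp
  calc (∀ E F : Fin 4 → ℝ, NT β b z₃ z₄ θ₁ θ₂ E F = 0)
    _ ↔ nijenhuis jmEnd (bkBilin β b z₃ z₄ θ₁ θ₂) = 0 := by
      simp only [LinearMap.ext_iff₂, nijenhuis_jmEnd_bkBilin, LinearMap.zero_apply]
    _ ↔ NT β b z₃ z₄ θ₁ θ₂ (Pi.single 0 1) (Pi.single 2 1) = 0 :=
      nijenhuis_eq_zero_iff_of_span_pair jmEnd_mul_self (isAlt_bkBilin β b z₃ z₄ θ₁ θ₂)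
        span_pair_union_image_jmEnd
    _ ↔ (1 - (β / b : ℝ) * Complex.I) ^ 2 * (z₄ - z₃ * Complex.I) = 0 := by
      rw [NT_single_zero_single_two]
      exact (ringHom_apply_apply_eq_zero_iff jmComplexAction.toRingHom).trans
        (or_iff_left Z_ne_zero)
    _ ↔ z₃ = 0 ∧ z₄ = 0 :=
      (one_sub_ofReal_mul_I_sq_mul_eq_zero_iff (β / b) z₄ z₃).trans and_comm

end
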